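/- arXiv:math-ph/0504038 — 2 statements merged into one kernel-verified Lean document; each statement's English description precedes it below -/
import Mathlib

section
/- Let 𝔤 be a finite-dimensional complex simple Lie algebra and let (c_m)_{m∈ℕ} be a family of linear endomorphisms of 𝔤 satisfying binom(m+n, m) · c_{m+n}([x, y]) = [c_m(x), c_n(y)] for all m, n ∈ ℕ and all x, y ∈ 𝔤, and such that c_m = 0 for all m greater than some nonnegative integer M. If not all c_m are zero, then c_0 is a Lie algebra automorphism of 𝔤 and c_m = 0 for every m ≥ 1. -/
/-!
Taking `m = 0` in the identity gives `c n ⁅x, y⁆ = ⁅c 0 x, c n y⁆`, so `ker (c n)` is an ideal;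
as `𝔤` is simple and finite-dimensional, every `c n` is zero or bijective. Let `N` be the largest
index with `c N ≠ 0`, so that `c N` is bijective. If `N ≥ 1`, then `⁅c N x, c N y⁆` is a multiple
of `c (2 * N) ⁅x, y⁆ = 0`, so by surjectivity `𝔤` is abelian, which is absurd. Hence `N = 0`, and
`c 0` is the only nonzero member of the family.
-/

/-- if linear endomorphisms `c_m` of a finite-dimensional complex
simple Lie algebra satisfy `binom (m+n) m • c_{m+n} ⁅x, y⁆ = ⁅c_m x, c_n y⁆`,
vanish for `m` large, and are not all zero, then `c 0` is a Lie algebra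
automorphism and `c m = 0` for all `m ≥ 1`. -/
theorem jet_homomorphism_rigidity
    (𝔤 : Type*) [LieRing 𝔤] [LieAlgebra ℂ 𝔤] [FiniteDimensional ℂ 𝔤]
    [LieAlgebra.IsSimple ℂ 𝔤]
    (c : ℕ → (𝔤 →ₗ[ℂ] 𝔤))
    (hc : ∀ m n : ℕ, ∀ x y : 𝔤,
      ((m + n).choose m : ℂ) • c (m + n) ⁅x, y⁆ = ⁅c m x, c n y⁆)
    (M : ℕ) (hM : ∀ m : ℕ, M < m → c m = 0)
    (hne : ∃ m : ℕ, c m ≠ 0) :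
    Function.Bijective (c 0) ∧
      (∀ x y : 𝔤, c 0 ⁅x, y⁆ = ⁅c 0 x, c 0 y⁆) ∧
      ∀ m : ℕ, 1 ≤ m → c m = 0 := by
  have hbij : ∀ n, c n ≠ 0 → Function.Bijective (c n) := by
    intro n hn
    let I : LieIdeal ℂ 𝔤 :=
      { LinearMap.ker (c n) with
        lie_mem := by
          intro x y hy
          have hy' : c n y = 0 := hy
          have h := hc 0 n x y
          simp only [Nat.choose_zero_right, Nat.cast_one, one_smul, zero_add, hy', lie_zero] at h
          exact h }
    have hinj : Function.Injective (c n) := by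
      rcases LieAlgebra.IsSimple.eq_bot_or_eq_top (R := ℂ) I with h | h
      · rw [injective_iff_map_eq_zero]
        intro x hx
        have hxI : x ∈ I := hx
        rwa [h, LieSubmodule.mem_bot] at hxI
      · refine absurd (LinearMap.ext fun x => ?_) hn
        have hxI : x ∈ I := h ▸ LieSubmodule.mem_top x
        exact hxI
    exact ⟨hinj, LinearMap.injective_iff_surjective.mp hinj⟩
  have hbdd : ∀ m, c m ≠ 0 → m ≤ M := fun m hm => not_lt.mp fun h => hm (hM m h)
  obtain ⟨k, hk⟩ := hne
  obtain ⟨N, hN, hmax⟩ : ∃ N, c N ≠ 0 ∧ ∀ m, N < m → c m = 0 := by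
    classical
    exact ⟨Nat.findGreatest (fun m => c m ≠ 0) M,
      Nat.findGreatest_spec (P := fun m => c m ≠ 0) (hbdd k hk) hk,
      fun m hm => by_contra fun h =>
        hm.not_ge (Nat.le_findGreatest (P := fun m => c m ≠ 0) (hbdd m h) h)⟩
  have hN0 : N = 0 := by
    by_contra h0
    refine LieAlgebra.IsSimple.non_abelian (R := ℂ) (L := 𝔤) ⟨fun u v => ?_⟩
    obtain ⟨x, rfl⟩ := (hbij N hN).2 u
    obtain ⟨y, rfl⟩ := (hbij N hN).2 v
    rw [← hc N N x y, hmax (N + N) (by omega), LinearMap.zero_apply, smul_zero]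
  subst hN0
  exact ⟨hbij 0 hN, fun x y => by simpa using hc 0 0 x y, fun m hm => hmax m hm⟩
end

section
/- Let v : ℝ → ℝ be a smooth 2π-periodic function and suppose Λ : ℝ × ℝ → ℝ satisfies ∂Λ/∂τ (τ, σ) = v(Λ(τ, σ)), Λ(0, σ) = σ for all σ, τ, and the time-periodicity condition that for all τ and σ, Λ(τ + 2π, σ) − Λ(τ, σ) is an integer multiple of 2π. Then either v is identically zero or v(σ) ≠ 0 for every σ ∈ ℝ. -/
/-!
Suppose `v` vanishes at `z` but `v a ≠ 0`, and let `x` be the trajectory through `a`. By uniqueness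
for Lipschitz ODEs, `x` never meets a zero of `v`, since it would then be constant
(`ne_zero_along_trajectory`). The zeros `z + 2πk` meet every half-open interval of length `2π`, so
by the intermediate value theorem `x` cannot move by `2π` or more. Hence `x (2π) - x 0`, an integer
multiple of `2π`, is zero, and Rolle's theorem gives a time at which `v (x t) = 0`, a contradiction.
-/

open Real

/-- A `C¹` periodic function is globally Lipschitz, its derivative being continuous and periodic,
hence bounded. -/
lemma exists_lipschitzWith_of_periodic {v : ℝ → ℝ} {c : ℝ} (hv : ContDiff ℝ 1 v)
    (hper : Function.Periodic v c) (hc : 0 < c) : ∃ K, LipschitzWith K v := by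
  have hdper : Function.Periodic (deriv v) c := fun x => by
    rw [← deriv_comp_add_const, funext hper]
  obtain ⟨C, hC⟩ := isCompact_Icc.exists_bound_of_continuousOn (s := Set.Icc (0 : ℝ) c)
    (hv.continuous_deriv le_rfl).continuousOn
  refine ⟨C.toNNReal, lipschitzWith_of_nnnorm_deriv_le (hv.differentiable one_ne_zero) fun x => ?_⟩
  obtain ⟨y, hy, hxy⟩ := hdper.exists_mem_Ico₀ hc x
  rw [hxy]
  exact NNReal.le_toNNReal_of_coe_le (hC y (Set.Ico_subset_Icc_self hy))

/-- A trajectory of an autonomous Lipschitz ODE that starts outside the zeros of `v` never reaches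
a zero: otherwise it would coincide with the constant trajectory there. -/
lemma ne_zero_along_trajectory {v x : ℝ → ℝ} {K : NNReal} (hv : LipschitzWith K v)
    (hx : ∀ t, HasDerivAt x (v (x t)) t) {s : ℝ} (hs : v (x s) ≠ 0) (t : ℝ) : v (x t) ≠ 0 := by
  intro ht
  have hconst : x = fun _ => x t :=
    ODE_solution_unique_univ (v := fun _ => v) (s := fun _ => Set.univ) (t₀ := t)
      (fun _ => hv.lipschitzOnWith) (fun r => ⟨hx r, Set.mem_univ _⟩)
      (fun r => ⟨by simpa [ht] using hasDerivAt_const r (x t), Set.mem_univ _⟩) rfl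
  exact hs (by rw [congrFun hconst s]; exact ht)

/-- if the flow `Λ` of a smooth `2π`-periodic vector field
`v d/ds` on `ℝ` (the lift of a vector field on the circle) is `2π`-periodic in
time modulo `2πℤ`, then either `v` vanishes identically or `v` has no zeros. -/
theorem periodic_flow_vector_field_dichotomy
    (v : ℝ → ℝ) (hv : ContDiff ℝ (⊤ : ℕ∞) v) (hvper : ∀ σ, v (σ + 2 * π) = v σ)
    (Λ : ℝ → ℝ → ℝ)
    (hoderiv : ∀ τ σ : ℝ, HasDerivAt (fun t => Λ t σ) (v (Λ τ σ)) τ)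
    (hinit : ∀ σ : ℝ, Λ 0 σ = σ)
    (htimeper : ∀ τ σ : ℝ, ∃ n : ℤ, Λ (τ + 2 * π) σ - Λ τ σ = n * (2 * π)) :
    (∀ σ, v σ = 0) ∨ (∀ σ, v σ ≠ 0) := by
  have hvper' : Function.Periodic v (2 * π) := hvper
  have hpos := two_pi_pos
  obtain ⟨K, hK⟩ := exists_lipschitzWith_of_periodic (hv.of_le (by norm_cast))
    hvper' hpos
  by_contra! h
  obtain ⟨⟨a, ha⟩, z, hz⟩ := h
  have hder : ∀ t, HasDerivAt (fun t => Λ t a) (v (Λ t a)) t := fun t => hoderiv t a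
  have hne : ∀ t, v (Λ t a) ≠ 0 :=
    ne_zero_along_trajectory hK hder (s := 0) (by simpa [hinit] using ha)
  have hcont : Continuous (fun t => Λ t a) :=
    continuous_iff_continuousAt.2 fun t => (hder t).continuousAt
  -- The range of the trajectory is an interval missing every `z + 2πk`, so it contains no two
  -- points at distance at least `2π`.
  have hgap : ∀ s t, Λ t a < Λ s a + 2 * π := by
    intro s t
    by_contra! hst
    obtain ⟨k, ⟨hk₁, hk₂⟩, -⟩ := existsUnique_add_zsmul_mem_Ico hpos z (Λ s a)
    obtain ⟨r, hr⟩ := mem_range_of_exists_le_of_exists_ge hcont ⟨s, hk₁⟩ ⟨t, hk₂.le.trans hst⟩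
    apply hne r
    simp only at hr
    rw [hr, hvper'.zsmul k z, hz]
  obtain ⟨n, hn⟩ := htimeper 0 a
  rw [zero_add] at hn
  have hn₀ : n = 0 := by
    have h₁ : (n : ℝ) < 1 := by nlinarith [hgap 0 (2 * π)]
    have h₂ : (-1 : ℝ) < n := by nlinarith [hgap (2 * π) 0]
    have h₁' : n < 1 := by exact_mod_cast h₁
    have h₂' : -1 < n := by exact_mod_cast h₂
    omega
  have hloop : Λ 0 a = Λ (2 * π) a := by
    rw [hn₀, Int.cast_zero, zero_mul] at hn
    linarith
  obtain ⟨c, -, hc⟩ := exists_hasDerivAt_eq_zero hpos hcont.continuousOn hloop fun t _ => hder t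
  exact hne c hc
end
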